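/- Let x₀ < ⋯ < xₙ be real nodes, let x̂₀ = x₀ < x̂₁ < ⋯ < x̂_{n−1} < x̂ₙ = xₙ, let y ∈ ℝ^{n+1}, and set z_k = z_k(x, x̂). Let ĉ_k := (x̂_{k−1} + x̂_k)/2 for 1 ≤ k ≤ n, and let v̂ be the family of 2n+1 points consisting of x̂₀, …, x̂ₙ together with ĉ₁, …, ĉₙ. Then max_{t ∈ [x₀, xₙ]} |E(t; y, z)| ≤ Λ(v̂)·max_{1≤k≤n} |E(ĉ_k; y, z)|, where Λ(v̂) is the Lebesgue constant of the 2n+1 points v̂ over [x₀, xₙ]. -/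

import Mathlib

/-- Barycentric weight `λ_k(x) = 1 / ∏_{j ≠ k} (x_k - x_j)`. -/
noncomputable def lam {n : ℕ} (x : Fin (n + 1) → ℝ) (k : Fin (n + 1)) : ℝ :=
  (∏ j ∈ Finset.univ.erase k, (x k - x j))⁻¹

/-- Relative error in the weights `z_k(x, x̂)`. -/
noncomputable def zk {n : ℕ} (x xh : Fin (n + 1) → ℝ) (k : Fin (n + 1)) : ℝ :=
  (lam x k - lam xh k) / lam xh k

/-- The Error Polynomial `E(t; y, z) = P_{yz}(t) - P_y(t)·P_z(t)`. -/
noncomputable def errP {n : ℕ} (xh y z : Fin (n + 1) → ℝ) (t : ℝ) : ℝ :=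
  (Lagrange.interpolate Finset.univ xh (fun k => y k * z k)).eval t -
    (Lagrange.interpolate Finset.univ xh y).eval t *
      (Lagrange.interpolate Finset.univ xh z).eval t

/-- The midpoints `ĉ_k = (x̂_{k-1} + x̂_k)/2`; `ch xh k` is the midpoint of the
interval `[x̂_k, x̂_{k+1}]`, i.e. `ĉ_{k+1}` for `k = 0, …, n-1`. -/
noncomputable def ch {n : ℕ} (xh : Fin (n + 1) → ℝ) (k : Fin n) : ℝ :=
  (xh k.castSucc + xh k.succ) / 2

/-- The Lebesgue constant of the node family `v` over the interval `[a, b]`. -/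
noncomputable def leb {ι : Type*} [Fintype ι] [DecidableEq ι] (v : ι → ℝ) (a b : ℝ) : ℝ :=
  ⨆ t : Set.Icc a b, ∑ k, |(Lagrange.basis Finset.univ v k).eval (t : ℝ)|

/-!
The error polynomial has degree at most `2n`, so it equals its own Lagrange interpolant at the
`2n + 1` distinct points `v̂`, and a polynomial that does so is bounded on the interval by `Λ(v̂)`
times its largest absolute value at these points. It vanishes at every `x̂_k`, where `P_{yz}` and
`P_y P_z` both take the value `y_k z_k`, so that largest value is attained at one of the other `n`
points.
-/

open Polynomial

section LebesgueConstant

variable {ι : Type*} [Fintype ι] [DecidableEq ι] {v : ι → ℝ} {a b t : ℝ}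

/-- By compactness of `[a, b]`, the supremum defining `leb` is not the junk value `0` of an
unbounded one. -/
lemma sum_abs_eval_basis_le_leb (v : ι → ℝ) (ht : t ∈ Set.Icc a b) :
    ∑ k, |(Lagrange.basis Finset.univ v k).eval t| ≤ leb v a b := by
  have hcont : Continuous fun s : Set.Icc a b =>
      ∑ k, |(Lagrange.basis Finset.univ v k).eval (s : ℝ)| := by
    fun_prop
  exact le_ciSup (isCompact_range hcont).bddAbove ⟨t, ht⟩

lemma abs_eval_interpolate_le_leb_mul [Nonempty ι] {r : ι → ℝ} {M : ℝ} (hr : ∀ k, |r k| ≤ M)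
    (ht : t ∈ Set.Icc a b) :
    |(Lagrange.interpolate Finset.univ v r).eval t| ≤ leb v a b * M := by
  have hM : 0 ≤ M := (abs_nonneg _).trans (hr (Classical.arbitrary ι))
  calc |(Lagrange.interpolate Finset.univ v r).eval t|
      = |∑ k, r k * (Lagrange.basis Finset.univ v k).eval t| := by
        simp only [Lagrange.interpolate_apply, eval_finsetSum, eval_mul, eval_C]
    _ ≤ ∑ k, |r k| * |(Lagrange.basis Finset.univ v k).eval t| := by
        simpa only [abs_mul] using Finset.abs_sum_le_sum_abs
          (fun k => r k * (Lagrange.basis Finset.univ v k).eval t) Finset.univ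
    _ ≤ ∑ k, M * |(Lagrange.basis Finset.univ v k).eval t| := by
        gcongr with k
        exact hr k
    _ = (∑ k, |(Lagrange.basis Finset.univ v k).eval t|) * M := by
        rw [← Finset.mul_sum, mul_comm]
    _ ≤ leb v a b * M := by
        gcongr
        exact sum_abs_eval_basis_le_leb v ht

lemma abs_eval_le_leb_mul [Nonempty ι] (hv : Function.Injective v) {p : ℝ[X]}
    (hp : p.degree < Fintype.card ι) {M : ℝ} (hM : ∀ k, |p.eval (v k)| ≤ M)
    (ht : t ∈ Set.Icc a b) : |p.eval t| ≤ leb v a b * M := by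
  rw [Lagrange.eq_interpolate hv.injOn hp]
  exact abs_eval_interpolate_le_leb_mul hM ht

end LebesgueConstant

section ErrorPolynomial

variable {F ι : Type*} [Field F] [DecidableEq ι] {s : Finset ι} {v : ι → F}

/-- The Error Polynomial `P_{yz} - P_y P_z` as an element of `F[X]`, for the nodes `v i`, `i ∈ s`,
in an arbitrary field. The function `errP` is its evaluation, see `errP_eq_eval_errorPoly`; the
polynomial itself is needed to speak of its degree. -/
noncomputable def errorPoly (s : Finset ι) (v y z : ι → F) : F[X] :=
  Lagrange.interpolate s v (fun i => y i * z i) -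
    Lagrange.interpolate s v y * Lagrange.interpolate s v z

lemma eval_errorPoly_node (hv : Set.InjOn v s) (y z : ι → F) {i : ι} (hi : i ∈ s) :
    (errorPoly s v y z).eval (v i) = 0 := by
  simp only [errorPoly, eval_sub, eval_mul, Lagrange.eval_interpolate_at_node _ hv hi, sub_self]

lemma natDegree_errorPoly_le (hv : Set.InjOn v s) (y z : ι → F) :
    (errorPoly s v y z).natDegree ≤ 2 * (s.card - 1) := by
  have hinterp (r : ι → F) : (Lagrange.interpolate s v r).natDegree ≤ s.card - 1 :=
    natDegree_le_of_degree_le (Lagrange.degree_interpolate_le r hv)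
  have hprod := natDegree_mul_le_of_le (hinterp y) (hinterp z)
  rw [← two_mul] at hprod
  exact (natDegree_sub_le _ _).trans (max_le ((hinterp _).trans (by omega)) hprod)

lemma errP_eq_eval_errorPoly {n : ℕ} (xh y z : Fin (n + 1) → ℝ) (t : ℝ) :
    errP xh y z t = (errorPoly Finset.univ xh y z).eval t := by
  simp only [errP, errorPoly, eval_sub, eval_mul]

end ErrorPolynomial

section Interlacing

variable {n : ℕ}

lemma sumElim_injective_of_interlacing {α : Type*} [Preorder α] {v : Fin (n + 1) → α}
    {c : Fin n → α} (hvc : ∀ k, v k.castSucc < c k) (hcv : ∀ k, c k < v k.succ) :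
    Function.Injective (Sum.elim v c) := by
  have hv : StrictMono v := Fin.strictMono_iff_lt_succ.2 fun k => (hvc k).trans (hcv k)
  have hc : StrictMono c := fun i j hij =>
    calc c i < v i.succ := hcv i
      _ ≤ v j.castSucc := hv.monotone (Fin.succ_le_castSucc_iff.2 hij)
      _ < c j := hvc j
  refine hv.injective.sumElim hc.injective fun i k hik => ?_
  have hki : k.castSucc < i := hv.lt_iff_lt.1 (hik ▸ hvc k)
  have hik' : i < k.succ := hv.lt_iff_lt.1 (hik ▸ hcv k)
  exact hik'.not_ge (Fin.castSucc_lt_iff_succ_le.1 hki)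

lemma sumElim_ch_injective {xh : Fin (n + 1) → ℝ} (hxh : StrictMono xh) :
    Function.Injective (Sum.elim xh (ch xh)) :=
  sumElim_injective_of_interlacing
    (fun _ => left_lt_add_div_two.2 (hxh Fin.castSucc_lt_succ))
    (fun _ => add_div_two_lt_right.2 (hxh Fin.castSucc_lt_succ))

end Interlacing

theorem stmt_7_general {n : ℕ} {κ : Type*} [Fintype κ] [DecidableEq κ] [Nonempty κ]
    {xh : Fin (n + 1) → ℝ} {c : κ → ℝ} (hinj : Function.Injective (Sum.elim xh c))
    (hcard : n ≤ Fintype.card κ) (y z : Fin (n + 1) → ℝ) {a b : ℝ} (hab : a ≤ b) :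
    (⨆ t : Set.Icc a b, |errP xh y z (t : ℝ)|) ≤
      leb (Sum.elim xh c) a b *
        Finset.univ.sup' Finset.univ_nonempty fun k => |errP xh y z (c k)| := by
  have hxh : Set.InjOn xh (Finset.univ : Finset (Fin (n + 1))) :=
    (hinj.comp Sum.inl_injective).injOn
  have hdeg : (errorPoly Finset.univ xh y z).degree < Fintype.card (Fin (n + 1) ⊕ κ) := by
    refine (degree_le_of_natDegree_le (natDegree_errorPoly_le hxh y z)).trans_lt ?_
    simp only [Finset.card_fin, Fintype.card_sum, Fintype.card_fin]
    exact_mod_cast (by omega : 2 * (n + 1 - 1) < n + 1 + Fintype.card κ)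
  have : Nonempty (Set.Icc a b) := (Set.nonempty_Icc.2 hab).to_subtype
  simp only [errP_eq_eval_errorPoly]
  set M := Finset.univ.sup' Finset.univ_nonempty
    fun k => |(errorPoly Finset.univ xh y z).eval (c k)|
  have hM (k : κ) : |(errorPoly Finset.univ xh y z).eval (c k)| ≤ M :=
    Finset.le_sup' (fun k => |(errorPoly Finset.univ xh y z).eval (c k)|) (Finset.mem_univ k)
  refine ciSup_le fun t => abs_eval_le_leb_mul hinj hdeg ?_ t.2
  rintro (i | k)
  · rw [Sum.elim_inl, eval_errorPoly_node hxh y z (Finset.mem_univ i), abs_zero]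
    exact (abs_nonneg _).trans (hM (Classical.arbitrary κ))
  · exact hM k

theorem stmt_7 {n : ℕ} (hn0 : 0 < n) (x xh y : Fin (n + 1) → ℝ)
    (hx : StrictMono x) (hxh : StrictMono xh)
    (h0 : xh 0 = x 0) (hn : xh (Fin.last n) = x (Fin.last n)) :
    (⨆ t : Set.Icc (x 0) (x (Fin.last n)), |errP xh y (zk x xh) (t : ℝ)|) ≤
      leb (Sum.elim xh (ch xh) : Fin (n + 1) ⊕ Fin n → ℝ) (x 0) (x (Fin.last n)) *
        (Finset.univ.sup' ⟨⟨0, hn0⟩, Finset.mem_univ _⟩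
          fun k : Fin n => |errP xh y (zk x xh) (ch xh k)|) := by
  have : Nonempty (Fin n) := ⟨⟨0, hn0⟩⟩
  exact stmt_7_general (sumElim_ch_injective hxh) (Fintype.card_fin n).ge y (zk x xh)
    (hx.monotone (Fin.zero_le _))
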